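/- Let p be a prime and G a finite group such that gcd(|G|, (p−1)(p²−1)⋯(pⁿ−1)) = 1 for some integer n ≥ 1. Then G is p-nilpotent if and only if G has a normal subgroup E such that G/E is p-nilpotent and, for some Sylow p-subgroup P of E, every n-maximal subgroup of P (if any exists) either has a p-nilpotent supplement in G or is 𝔘ₛ-quasinormal in G. -/

import Mathlib

open scoped Pointwise

universe u

/-- `M` is a maximal subgroup of `K` (within the subgroup lattice of the ambient group). -/
def IsMaximalIn {G : Type*} [Group G] (M K : Subgroup G) : Prop :=
  M < K ∧ ∀ L : Subgroup G, M < L → L ≤ K → L = K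

/-- `P` is a Sylow `p`-subgroup of the subgroup `E`. -/
def IsSylowIn {G : Type*} [Group G] (p : ℕ) (P E : Subgroup G) : Prop :=
  P ≤ E ∧ IsPGroup p P ∧ ¬ p ∣ (P.subgroupOf E).index

/-- `H` is s-permutable in `G`: it permutes with every Sylow subgroup of `G`. -/
def SPermutable {G : Type*} [Group G] (H : Subgroup G) : Prop :=
  ∀ q : ℕ, q.Prime → ∀ Q : Subgroup G, IsSylowIn q Q ⊤ →
    (H : Set G) * (Q : Set G) = (Q : Set G) * (H : Set G)

/-- `A/B` is a chief factor of the ambient group. -/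
def IsChiefFactor {G : Type*} [Group G] (A B : Subgroup G) : Prop :=
  A.Normal ∧ B.Normal ∧ B < A ∧ ∀ L : Subgroup G, L.Normal → B < L → L < A → False

/-- The 𝔘-hypercenter: the product of all normal subgroups `N` such that every chief
factor `A/B` with `A ≤ N` has prime order. -/
def UHypercenter (G : Type*) [Group G] : Subgroup G :=
  sSup {N : Subgroup G | N.Normal ∧
    ∀ A B : Subgroup G, IsChiefFactor A B → A ≤ N → (B.relIndex A).Prime}

/-- The 𝔖-hypercenter: the product of all normal subgroups `N` such that every chief
factor `A/B` with `A ≤ N` is abelian with `G/C_G(A/B)` soluble. -/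
def SHypercenter (G : Type*) [Group G] : Subgroup G :=
  sSup {N : Subgroup G | N.Normal ∧
    ∀ A B : Subgroup G, IsChiefFactor A B → A ≤ N →
      (∀ a ∈ A, ∀ b ∈ A, a * b * a⁻¹ * b⁻¹ ∈ B) ∧
      ∃ C : Subgroup G, ∃ _ : C.Normal,
        (∀ g : G, g ∈ C ↔ ∀ h ∈ A, g * h * g⁻¹ * h⁻¹ ∈ B) ∧ IsSolvable (G ⧸ C)}

/-- `H` is 𝔘ₛ-quasinormal in `G`. -/
def UsQuasinormal {G : Type*} [Group G] (H : Subgroup G) : Prop :=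
  ∃ T : Subgroup G, T.Normal ∧ SPermutable (H ⊔ T) ∧
    ∀ x ∈ H ⊓ T,
      (QuotientGroup.mk x : G ⧸ H.normalCore) ∈ UHypercenter (G ⧸ H.normalCore)

/-- `H` is 𝔖ₛ-quasinormal in `G`. -/
def SsQuasinormal {G : Type*} [Group G] (H : Subgroup G) : Prop :=
  ∃ T : Subgroup G, T.Normal ∧ SPermutable (H ⊔ T) ∧
    ∀ x ∈ H ⊓ T,
      (QuotientGroup.mk x : G ⧸ H.normalCore) ∈ SHypercenter (G ⧸ H.normalCore)

/-- A group is supersoluble if it has a chain of subgroups, each normal in the whole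
group, reaching from `⊥` to `⊤`, with all successive factors cyclic. -/
def IsSupersoluble (G : Type*) [Group G] : Prop :=
  ∃ (k : ℕ) (c : Fin (k + 1) → Subgroup G),
    c 0 = ⊥ ∧ c (Fin.last k) = ⊤ ∧ (∀ i, (c i).Normal) ∧
    (∀ i : Fin k, c i.castSucc ≤ c i.succ) ∧
    ∀ i : Fin k, ∃ g ∈ c i.succ, ∀ x ∈ c i.succ, ∃ m : ℤ, x⁻¹ * g ^ m ∈ c i.castSucc

/-- `A` is subnormal in `G`. -/
def IsSubnormal {G : Type*} [Group G] (A : Subgroup G) : Prop :=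
  ∃ (n : ℕ) (c : Fin (n + 1) → Subgroup G), c 0 = A ∧ c (Fin.last n) = ⊤ ∧
    ∀ i : Fin n, c i.castSucc ≤ c i.succ ∧
      ∀ x ∈ c i.succ, ∀ a ∈ c i.castSucc, x * a * x⁻¹ ∈ c i.castSucc

/-- `H` has a supersoluble supplement in the ambient group. -/
def HasSupersolubleSupplement {G : Type*} [Group G] (H : Subgroup G) : Prop :=
  ∃ T : Subgroup G, IsSupersoluble T ∧ (H : Set G) * (T : Set G) = Set.univ

/-- A group is `p`-nilpotent if it has a normal subgroup of order prime to `p`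
and of `p`-power index (a normal `p`-complement). -/
def IsPNilpotent (p : ℕ) (G : Type*) [Group G] : Prop :=
  ∃ N : Subgroup G, N.Normal ∧ Nat.Coprime (Nat.card N) p ∧ ∃ k : ℕ, N.index = p ^ k

/-- `H` has a `p`-nilpotent supplement in the ambient group. -/
def HasPNilpotentSupplement {G : Type*} [Group G] (p : ℕ) (H : Subgroup G) : Prop :=
  ∃ T : Subgroup G, IsPNilpotent p T ∧ (H : Set G) * (T : Set G) = Set.univ

/-- `H` is an `n`-maximal subgroup of `P`: there is a chain
`H = Hₙ < ⋯ < H₁ < H₀ = P` with each term maximal in the preceding one. -/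
def IsNMaximalIn {G : Type*} [Group G] (n : ℕ) (H P : Subgroup G) : Prop :=
  ∃ c : Fin (n + 1) → Subgroup G, c 0 = P ∧ c (Fin.last n) = H ∧
    ∀ i : Fin n, IsMaximalIn (c i.succ) (c i.castSucc)

/-- A group is quasinilpotent if every element induces an inner automorphism
on every chief factor. -/
def IsQuasinilpotentGroup (G : Type*) [Group G] : Prop :=
  ∀ A B : Subgroup G, IsChiefFactor A B →
    ∀ x : G, ∃ y ∈ A, ∀ h ∈ A, (x * h * x⁻¹) * (y * h * y⁻¹)⁻¹ ∈ B

/-- The generalized Fitting subgroup: the product of all normal quasinilpotent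
subgroups. -/
def generalizedFitting (G : Type*) [Group G] : Subgroup G :=
  sSup {N : Subgroup G | N.Normal ∧ IsQuasinilpotentGroup N}

/-- The generalized Fitting subgroup of a subgroup `H`, as a subgroup of `G`. -/
def FStarIn {G : Type*} [Group G] (H : Subgroup G) : Subgroup G :=
  (generalizedFitting H).map H.subtype

/-- The Fitting subgroup: the product of all nilpotent normal subgroups. -/
def fittingSubgroup (G : Type*) [Group G] : Subgroup G :=
  sSup {N : Subgroup G | N.Normal ∧ Group.IsNilpotent N}

/-- The Fitting subgroup of a subgroup `H`, as a subgroup of `G`. -/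
def FittingIn {G : Type*} [Group G] (H : Subgroup G) : Subgroup G :=
  (fittingSubgroup H).map H.subtype

/-!
Choose a normal subgroup `L` of `p`-power index in `G` having `P` as a Sylow `p`-subgroup. By
Tate's theorem `G` is `p`-nilpotent as soon as every homomorphism `f : P →* ℤ/p` extends to `L`,
and the transfer shows that this holds if for every `f ≠ 1` there is an element `x` with `f x ≠ 1`
at which `f` is compatible with fusion in `L`. Such an `x` comes from an `n`-maximal subgroup `H`
of `P` which is normal in `P` and contained in the kernel of `f`.

A `p`-nilpotent supplement of `H` provides an `x` normalizing a complement of `P` in `L`. If `H`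
is `𝔘ₛ`-quasinormal, the coprimality hypothesis makes every `p'`-group act trivially on a
`p`-group `D` as soon as it centralizes a subgroup whose index in `D` divides `p ^ n`. Hence the
`p`-subgroups of a suitable normal subgroup of a quotient of `L` have `p`-groups of automorphisms,
and Alperin's fusion argument, relative to that normal subgroup, shows that fusion of their
elements is controlled by `P`.
-/

section Generation

variable {G : Type*} [Group G] {p : ℕ}

lemma eq_top_of_forall_sylow_le [Finite G] (K : Subgroup G)
    (h : ∀ q : ℕ, q.Prime → ∃ Q : Sylow q G, (Q : Subgroup G) ≤ K) : K = ⊤ := by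
  by_contra hK
  obtain ⟨q, hq, hdvd⟩ := Nat.exists_prime_and_dvd (mt Subgroup.index_eq_one.1 hK)
  obtain ⟨Q, hQ⟩ := h q hq
  have := Fact.mk hq
  exact Q.not_dvd_index (hdvd.trans (Subgroup.index_dvd_of_le hQ))

lemma eq_top_of_sylow_le_of_forall_isPGroup_le [Finite G] (P : Sylow p G) {K : Subgroup G}
    (hP : (P : Subgroup G) ≤ K)
    (h : ∀ q : ℕ, q.Prime → q ≠ p → ∀ Q : Subgroup G, IsPGroup q Q → Q ≤ K) : K = ⊤ := by
  refine eq_top_of_forall_sylow_le K fun q hq => ?_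
  obtain rfl | hqp := eq_or_ne q p
  · exact ⟨P, hP⟩
  · exact ⟨default, h q hq hqp _ (default : Sylow q G).isPGroup'⟩

lemma mem_of_coprime_orderOf_of_index_eq_pow (N : Subgroup G) [N.Normal] {k : ℕ}
    (hN : N.index = p ^ k) {x : G} (hx : (orderOf x).Coprime p) : x ∈ N := by
  rw [← QuotientGroup.eq_one_iff, ← orderOf_eq_one_iff]
  refine Nat.eq_one_of_dvd_coprimes (hx.pow_right k) (orderOf_map_dvd (QuotientGroup.mk' N) x) ?_
  rw [← hN, Subgroup.index_eq_card]
  exact orderOf_dvd_natCard _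

lemma coprime_orderOf_of_isPGroup {q : ℕ} (hp : p.Prime) (hq : q.Prime) (hqp : q ≠ p)
    {Q : Subgroup G} (hQ : IsPGroup q Q) {x : G} (hx : x ∈ Q) : (orderOf x).Coprime p := by
  obtain ⟨k, hk⟩ := hQ ⟨x, hx⟩
  refine Nat.Coprime.coprime_dvd_left (orderOf_dvd_of_pow_eq_one (n := q ^ k) ?_)
    (Nat.Coprime.pow_left k ((Nat.coprime_primes hq hp).2 hqp))
  exact congrArg Subtype.val hk

end Generation

section RelIndex

variable {G : Type*} [Group G]

lemma relIndex_eq_of_subset_mul {K T J : Subgroup G} (hTJ : T ≤ J)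
    (hJ : (J : Set G) ⊆ (T : Set G) * (K : Set G)) : K.relIndex T = K.relIndex J := by
  rw [Subgroup.relIndex, Subgroup.relIndex, Subgroup.index_eq_card, Subgroup.index_eq_card]
  refine Nat.card_congr (Equiv.ofBijective (Subgroup.quotientSubgroupOfEmbeddingOfLE K hTJ)
    ⟨(Subgroup.quotientSubgroupOfEmbeddingOfLE K hTJ).injective, fun q => ?_⟩)
  induction q using QuotientGroup.induction_on with
  | H j =>
    obtain ⟨t, ht, k, hk, htk⟩ := hJ j.2
    refine ⟨QuotientGroup.mk ⟨t, ht⟩, ?_⟩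
    rw [Subgroup.quotientSubgroupOfEmbeddingOfLE_apply_mk, QuotientGroup.eq,
      Subgroup.mem_subgroupOf]
    change t⁻¹ * (j : G) ∈ K
    rwa [← htk, inv_mul_cancel_left]

lemma relIndex_sup_of_normal (H N : Subgroup G) [N.Normal] : H.relIndex (H ⊔ N) = H.relIndex N := by
  refine (relIndex_eq_of_subset_mul le_sup_right ?_).symm
  rw [sup_comm, Subgroup.normal_mul]

lemma not_dvd_sylow_relIndex_of_normal [Finite G] {p : ℕ} [Fact p.Prime] (P : Sylow p G)
    (N : Subgroup G) [N.Normal] : ¬ p ∣ (P : Subgroup G).relIndex N := by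
  rw [← relIndex_sup_of_normal]
  exact fun h => P.not_dvd_index (h.trans (Dvd.intro _ (Subgroup.relIndex_mul_index le_sup_left)))

lemma relIndex_dvd_of_le_of_normal_subgroupOf {H P K : Subgroup G} (hKP : K ≤ P)
    [hH : (H.subgroupOf P).Normal] : H.relIndex K ∣ H.relIndex P := by
  rw [← Subgroup.relIndex_subgroupOf hKP]
  exact Subgroup.relIndex_dvd_index_of_normal _ _

lemma card_dvd_relIndex_ker_of_sylow [Finite G] {p : ℕ} [Fact p.Prime] {G' : Type*} [Group G']
    (φ : G →* G') (R : Sylow p G) {D : Subgroup G'} (hD : IsPGroup p D) (hφ : D ≤ φ.range) :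
    Nat.card D ∣ φ.ker.relIndex R := by
  have hsurj := φ.rangeRestrict_surjective
  have : Finite φ.range := Finite.of_surjective _ hsurj
  have hcard : Nat.card (R.mapSurjective hsurj) = φ.ker.relIndex R := by
    rw [← φ.ker_rangeRestrict, Subgroup.relIndex_ker, ← Sylow.coe_mapSurjective hsurj R]
  have hD' : IsPGroup p (D.subgroupOf φ.range) := hD.comap_subtype
  obtain ⟨k, hk⟩ := hD'.exists_card_eq
  rw [← hcard, ← Nat.card_congr (Subgroup.subgroupOfEquivOfLe hφ).toEquiv, hk]
  exact (R.mapSurjective hsurj).pow_dvd_card_of_pow_dvd_card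
    (hk ▸ Subgroup.card_subgroup_dvd_card _)

lemma relIndex_dvd_of_sylow_of_le_map [Finite G] {p : ℕ} [Fact p.Prime] {G' : Type*} [Group G']
    (P : Sylow p G) (B : Subgroup G) [B.Normal] (φ : G →* G') (Z : Subgroup G') [Z.Normal]
    {K : Subgroup G} [(K.subgroupOf P).Normal] (hZ : K ⊓ B ≤ Z.comap φ) {D : Subgroup G'}
    (hDB : D ≤ B.map φ) (hD : IsPGroup p D) : Z.relIndex D ∣ K.relIndex P := by
  let R : Sylow p B :=
    (P.2.comap_subtype (K := B)).toSylow (not_dvd_sylow_relIndex_of_normal P B)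
  have hR : (R : Subgroup B) = (P : Subgroup G).subgroupOf B := IsPGroup.toSylow_coe _ _
  let ψ := (QuotientGroup.mk' Z).comp (φ.comp B.subtype)
  have hψ : D.map (QuotientGroup.mk' Z) ≤ ψ.range := by
    rintro _ ⟨_, hd, rfl⟩
    obtain ⟨b, hb, rfl⟩ := hDB hd
    exact ⟨⟨b, hb⟩, rfl⟩
  have hker : K.subgroupOf B ≤ ψ.ker := fun b hb =>
    (QuotientGroup.eq_one_iff (N := Z) _).2 (hZ ⟨hb, b.2⟩)
  calc Z.relIndex D = Nat.card (D.map (QuotientGroup.mk' Z)) := by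
        rw [← Subgroup.relIndex_ker, QuotientGroup.ker_mk']
    _ ∣ ψ.ker.relIndex R := card_dvd_relIndex_ker_of_sylow ψ R (hD.map _) hψ
    _ ∣ (K.subgroupOf B).relIndex R := Subgroup.relIndex_dvd_of_le_left _ hker
    _ = K.relIndex ((P : Subgroup G) ⊓ B) := by
        rw [hR, ← Subgroup.inf_subgroupOf_right (P : Subgroup G) B,
          Subgroup.relIndex_subgroupOf inf_le_right]
    _ ∣ K.relIndex P := relIndex_dvd_of_le_of_normal_subgroupOf inf_le_left

end RelIndex

lemma quotientMap_subgroupOf_injective {G : Type*} [Group G] (L C : Subgroup G) [C.Normal] :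
    Function.Injective (QuotientGroup.map (C.subgroupOf L) C L.subtype le_rfl) := by
  rw [injective_iff_map_eq_one]
  rintro ⟨y⟩ hy
  exact (QuotientGroup.eq_one_iff y).2 ((QuotientGroup.eq_one_iff (y : G)).1 hy)

lemma IsPNilpotent.of_injective {G G' : Type*} [Group G] [Group G'] {p : ℕ} (hp : p.Prime)
    (h : IsPNilpotent p G) (φ : G' →* G) (hφ : Function.Injective φ) : IsPNilpotent p G' := by
  obtain ⟨N, hN, hcard, k, hk⟩ := h
  refine ⟨N.comap φ, inferInstance, ?_, ?_⟩
  · exact Nat.Coprime.coprime_dvd_left (Subgroup.card_comap_dvd_of_injective N φ hφ) hcard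
  · have hdvd : (N.comap φ).index ∣ p ^ k := by
      rw [Subgroup.index_comap, ← hk]
      exact Subgroup.relIndex_dvd_index_of_normal N _
    obtain ⟨j, -, hj⟩ := (Nat.dvd_prime_pow hp).1 hdvd
    exact ⟨j, hj⟩

lemma HasPNilpotentSupplement.of_map {G L : Type*} [Group G] [Group L] {p : ℕ} {φ : L →* G}
    (hφ : Function.Injective φ) (hp : p.Prime) {K : Subgroup L}
    (h : HasPNilpotentSupplement p (K.map φ)) : HasPNilpotentSupplement p K := by
  obtain ⟨T, hT, hKT⟩ := h
  refine ⟨T.comap φ, hT.of_injective hp (φ.subgroupComap T) fun x y hxy =>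
    Subtype.ext (hφ (congrArg Subtype.val hxy)), Set.eq_univ_of_forall fun x => ?_⟩
  obtain ⟨_, ⟨k, hk, rfl⟩, t, ht, hkt⟩ : φ x ∈ ((K.map φ : Subgroup G) : Set G) * (T : Set G) :=
    hKT ▸ Set.mem_univ _
  refine ⟨k, hk, k⁻¹ * x, ?_, mul_inv_cancel_left k x⟩
  rw [SetLike.mem_coe, Subgroup.mem_comap, map_mul, map_inv]
  exact eq_inv_mul_of_mul_eq hkt ▸ ht

/-- The `p`-residual `O^p(G)`, generated by the elements of order prime to `p`. In a finite group it
is the smallest normal subgroup of `p`-power index. -/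
def pResidual (p : ℕ) (G : Type*) [Group G] : Subgroup G :=
  Subgroup.closure {x : G | (orderOf x).Coprime p}

section pResidual

variable {G : Type*} [Group G] {p : ℕ}

lemma mem_pResidual_of_coprime {x : G} (hx : (orderOf x).Coprime p) : x ∈ pResidual p G :=
  Subgroup.subset_closure hx

instance pResidual_normal : (pResidual p G).Normal where
  conj_mem x hx g := by
    have hle : pResidual p G ≤ (pResidual p G).comap (MulAut.conj g).toMonoidHom :=
      (Subgroup.closure_le _).2 fun y hy => mem_pResidual_of_coprime <| by
        rwa [MulEquiv.toMonoidHom_eq_coe, MonoidHom.coe_coe, MulEquiv.orderOf_eq]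
    exact hle hx

lemma pResidual_sup_sylow [Finite G] (hp : p.Prime) (P : Sylow p G) : pResidual p G ⊔ P = ⊤ :=
  eq_top_of_sylow_le_of_forall_isPGroup_le P le_sup_right fun _ hq hqp _ hQ _ hx =>
    Subgroup.mem_sup_left (mem_pResidual_of_coprime (coprime_orderOf_of_isPGroup hp hq hqp hQ hx))

lemma exists_index_pResidual_eq_pow [Finite G] (hp : p.Prime) :
    ∃ k, (pResidual p G).index = p ^ k := by
  have := Fact.mk hp
  let P : Sylow p G := default
  have hindex : (pResidual p G).index = (pResidual p G).relIndex P := by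
    rw [← Subgroup.relIndex_sup_right, sup_comm, pResidual_sup_sylow hp,
      Subgroup.relIndex_top_right]
  obtain ⟨k, hk⟩ := P.2.exists_card_eq
  have hdvd : (pResidual p G).relIndex P ∣ p ^ k := hk ▸ Subgroup.index_dvd_card _
  obtain ⟨j, -, hj⟩ := (Nat.dvd_prime_pow hp).1 hdvd
  exact ⟨j, hindex.trans hj⟩

lemma pResidual_le_map_subtype (L : Subgroup G) [L.Normal] {k : ℕ} (hL : L.index = p ^ k) :
    pResidual p G ≤ (pResidual p L).map L.subtype :=
  (Subgroup.closure_le _).2 fun x hx =>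
    ⟨⟨x, mem_of_coprime_orderOf_of_index_eq_pow L hL hx⟩,
      mem_pResidual_of_coprime (by rwa [Subgroup.orderOf_mk]), rfl⟩

lemma pResidual_pResidual_eq_top [Finite G] (hp : p.Prime) : pResidual p (pResidual p G) = ⊤ := by
  obtain ⟨k, hk⟩ := exists_index_pResidual_eq_pow (G := G) hp
  refine eq_top_iff.2 fun x _ => ?_
  obtain ⟨y, hy, hyx⟩ := pResidual_le_map_subtype _ hk x.2
  rwa [← Subtype.ext hyx]

lemma isPNilpotent_of_coprime_card_pResidual [Finite G] (hp : p.Prime) (L : Subgroup G) [L.Normal]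
    {k : ℕ} (hL : L.index = p ^ k) (h : (Nat.card (pResidual p L)).Coprime p) :
    IsPNilpotent p G :=
  ⟨pResidual p G, pResidual_normal, Nat.Coprime.coprime_dvd_left
    ((Subgroup.card_dvd_of_le (pResidual_le_map_subtype L hL)).trans (Subgroup.card_map_dvd _ _)) h,
    exists_index_pResidual_eq_pow hp⟩

end pResidual

section PGroup

variable {P : Type*} [Group P] {p : ℕ}

lemma commutator_top_lt_of_ne_bot [Group.IsNilpotent P] {N : Subgroup P} [N.Normal] (hN : N ≠ ⊥) :
    ⁅N, (⊤ : Subgroup P)⁆ < N := by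
  refine lt_of_le_of_ne (Subgroup.commutator_le_left N ⊤) fun heq => hN ?_
  have hle (k : ℕ) : N ≤ (⊤ : Subgroup P).lowerCentralSeries k := by
    induction k with
    | zero => simp only [Subgroup.lowerCentralSeries_zero, le_top]
    | succ k ih => exact heq.symm.le.trans (Subgroup.commutator_mono ih le_rfl)
  obtain ⟨k, hk⟩ := Subgroup.nilpotent_iff_lowerCentralSeries.1 ‹Group.IsNilpotent P›
  exact eq_bot_iff.2 (hk ▸ hle k)

lemma normal_of_commutator_top_le {M N : Subgroup P} (hM : M ≤ N)
    (h : ⁅N, (⊤ : Subgroup P)⁆ ≤ M) : M.Normal where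
  conj_mem x hx g := by
    have hcomm : g * x * g⁻¹ * x⁻¹ ∈ M :=
      h (Subgroup.commutator_comm N ⊤ ▸
        Subgroup.commutator_mem_commutator (Subgroup.mem_top g) (hM hx))
    rw [← inv_mul_cancel_right (g * x * g⁻¹) x]
    exact mul_mem hcomm hx

lemma exists_le_index_eq_prime [Finite P] [Fact p.Prime] (hP : IsPGroup p P) {C : Subgroup P}
    (hC : C ≠ ⊤) : ∃ K : Subgroup P, C ≤ K ∧ K.index = p := by
  have hp : p.Prime := Fact.out
  obtain ⟨m, hm⟩ := hP.exists_card_eq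
  obtain ⟨a, ha⟩ := (hP.to_subgroup C).exists_card_eq
  have ham : a < m := by
    rw [← Nat.pow_lt_pow_iff_right hp.one_lt, ← ha, ← hm]
    exact lt_of_le_of_ne C.card_le_card_group (mt C.card_eq_iff_eq_top.1 hC)
  obtain ⟨K, hK, hCK⟩ := Sylow.exists_subgroup_card_pow_prime_le p (m := m - 1)
    (hm ▸ pow_dvd_pow p (Nat.sub_le m 1)) C ha (by lia)
  refine ⟨K, hCK, Nat.eq_of_mul_eq_mul_left (pow_pos hp.pos (m - 1)) ?_⟩
  rw [← hK, K.card_mul_index, hm, hK, ← pow_succ, Nat.sub_add_cancel (by lia)]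

lemma exists_relIndex_eq_prime_of_commutator_le [Finite P] [Fact p.Prime] (hP : IsPGroup p P)
    {N : Subgroup P} [N.Normal] (hN : N ≠ ⊥) :
    ∃ M ≤ N, M.relIndex N = p ∧ ⁅N, (⊤ : Subgroup P)⁆ ≤ M := by
  have := hP.isNilpotent
  have hlt := commutator_top_lt_of_ne_bot hN
  obtain ⟨K, hCK, hK⟩ := exists_le_index_eq_prime (hP.to_subgroup N)
    (C := ⁅N, (⊤ : Subgroup P)⁆.subgroupOf N) (mt Subgroup.subgroupOf_eq_top.1 hlt.not_ge)
  refine ⟨K.map N.subtype, Subgroup.map_subtype_le K, ?_, ?_⟩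
  · rw [Subgroup.relIndex, Subgroup.subgroupOf,
      Subgroup.comap_map_eq_self_of_injective N.subtype_injective, hK]
  · rw [← Subgroup.map_subgroupOf_eq_of_le hlt.le]
    exact Subgroup.map_mono hCK

end PGroup

section NMaximal

variable {G G' : Type*} [Group G] [Group G'] {m : ℕ}

lemma isMaximalIn_of_prime_relIndex {M N : Subgroup G} (hle : M ≤ N)
    (hprime : (M.relIndex N).Prime) : IsMaximalIn M N := by
  refine ⟨lt_of_le_not_ge hle fun h => hprime.ne_one (Subgroup.relIndex_eq_one.2 h),
    fun L hML hLN => ?_⟩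
  have hmul := Subgroup.relIndex_mul_relIndex M L N hML.le hLN
  have hML1 : M.relIndex L ≠ 1 := fun h => hML.not_ge (Subgroup.relIndex_eq_one.1 h)
  have hLM := ((Nat.dvd_prime hprime).1 (Dvd.intro _ hmul)).resolve_left hML1
  rw [hLM, Nat.mul_eq_left hprime.ne_zero] at hmul
  exact le_antisymm hLN (Subgroup.relIndex_eq_one.1 hmul)

lemma IsMaximalIn.map {M K : Subgroup G} (h : IsMaximalIn M K) {φ : G →* G'}
    (hφ : Function.Injective φ) : IsMaximalIn (M.map φ) (K.map φ) := by
  refine ⟨(Subgroup.map_lt_map_iff_of_injective hφ).2 h.1, fun L hML hLK => ?_⟩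
  have hL : (L.comap φ).map φ = L :=
    Subgroup.map_comap_eq_self (hLK.trans (Subgroup.map_le_range φ K))
  rw [← hL] at hML hLK ⊢
  rw [h.2 _ ((Subgroup.map_lt_map_iff_of_injective hφ).1 hML)
    ((Subgroup.map_le_map_iff_of_injective hφ).1 hLK)]

lemma IsNMaximalIn.map {H P : Subgroup G} (h : IsNMaximalIn m H P) {φ : G →* G'}
    (hφ : Function.Injective φ) : IsNMaximalIn m (H.map φ) (P.map φ) := by
  obtain ⟨c, rfl, rfl, hc⟩ := h
  exact ⟨fun i => (c i).map φ, rfl, rfl, fun i => (hc i).map hφ⟩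

lemma IsNMaximalIn.cons {H N P : Subgroup G} (hN : IsMaximalIn N P) (hH : IsNMaximalIn m H N) :
    IsNMaximalIn (m + 1) H P := by
  obtain ⟨c, hc0, rfl, hc⟩ := hH
  refine ⟨Fin.cons P c, rfl, by rw [← Fin.succ_last, Fin.cons_succ], fun i => ?_⟩
  cases i using Fin.cases with
  | zero => rwa [Fin.castSucc_zero, Fin.cons_zero, Fin.cons_succ, hc0]
  | succ i => simpa only [Fin.cons_succ, ← Fin.succ_castSucc] using hc i

lemma exists_normal_isNMaximalIn {P : Type*} [Group P] [Finite P] {p : ℕ} [Fact p.Prime]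
    (hP : IsPGroup p P) (N : Subgroup P) [N.Normal] (hN : p ^ m ∣ Nat.card N) :
    ∃ H ≤ N, H.Normal ∧ H.relIndex N = p ^ m ∧ IsNMaximalIn m H N := by
  have hp : p.Prime := Fact.out
  induction m generalizing N with
  | zero => exact ⟨N, le_rfl, ‹_›, by simp, fun _ => N, rfl, rfl, fun i => i.elim0⟩
  | succ m ih =>
    have hne : N ≠ ⊥ := by
      rintro rfl
      rw [Subgroup.card_bot, Nat.dvd_one, Nat.pow_eq_one] at hN
      exact hN.elim hp.ne_one m.succ_ne_zero
    obtain ⟨M, hMN, hindex, hcomm⟩ := exists_relIndex_eq_prime_of_commutator_le hP hne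
    have hcard : Nat.card M * p = Nat.card N := by
      rw [← hindex, ← Subgroup.relIndex_bot_left, ← Subgroup.relIndex_bot_left N,
        Subgroup.relIndex_mul_relIndex ⊥ M N bot_le hMN]
    have := normal_of_commutator_top_le hMN hcomm
    obtain ⟨H, hHM, hH, hHindex, hmax⟩ :=
      ih M (Nat.dvd_of_mul_dvd_mul_right hp.pos (by rwa [hcard, ← pow_succ]))
    refine ⟨H, hHM.trans hMN, hH, ?_, .cons (isMaximalIn_of_prime_relIndex hMN (hindex ▸ hp)) hmax⟩
    rw [← Subgroup.relIndex_mul_relIndex H M N hHM hMN, hHindex, hindex, pow_succ]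

end NMaximal

section TransversalShift

open Subgroup.leftTransversals

variable {K : Type*} [Group K] {D : Subgroup K} [D.FiniteIndex] {A : Type*} [CommGroup A]
  {U : Type*} [Group U] [MulDistribMulAction U K] [MulAction.QuotientAction U D]

lemma diff_smul_smul_of_invariant {l : D →* A}
    (hl : ∀ (u : U) (d : K) (hd : d ∈ D) (hud : u • d ∈ D), l ⟨u • d, hud⟩ = l ⟨d, hd⟩)
    (u : U) (S T : D.LeftTransversal) : diff l (u • S) (u • T) = diff l S T := by
  let _ := D.fintypeQuotientOfFiniteIndex
  refine Fintype.prod_equiv (MulAction.toPerm u).symm _ _ fun q => ?_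
  simp only [Subgroup.smul_apply_eq_smul_apply_inv_smul, ← smul_inv', ← smul_mul']
  exact hl u _ _ _

/-- For an action of `U` on `K` that preserves `D ≤ K` and a homomorphism `l` on `D`, the
homomorphism on `U` measuring through `l` how far `u ∈ U` moves a transversal of `D` in `K`. -/
noncomputable def transversalShift (l : D →* A)
    (hl : ∀ (u : U) (d : K) (hd : d ∈ D) (hud : u • d ∈ D), l ⟨u • d, hud⟩ = l ⟨d, hd⟩) :
    U →* A where
  toFun u := diff l default (u • (default : D.LeftTransversal))
  map_one' := by rw [one_smul, diff_self]
  map_mul' u v := by rw [mul_smul, ← diff_mul_diff, diff_smul_smul_of_invariant hl]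

lemma transversalShift_mul_pow_index {l : D →* A}
    (hl : ∀ (u : U) (d : K) (hd : d ∈ D) (hud : u • d ∈ D), l ⟨u • d, hud⟩ = l ⟨d, hd⟩)
    {u : U} {d : D} (hu : ∀ x : K, u • x = d * x * (d : K)⁻¹) :
    transversalShift l hl u * l d ^ D.index = MonoidHom.transfer l (d : K) := by
  let _ := D.fintypeQuotientOfFiniteIndex
  let T : D.LeftTransversal := default
  have hu' (x : K) : u⁻¹ • x = (d : K)⁻¹ * x * d := by
    rw [inv_smul_eq_iff, hu]; group
  have hq (q : K ⧸ D) : u⁻¹ • q = (d : K)⁻¹ • q := by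
    induction q using QuotientGroup.induction_on with
    | H x =>
      rw [MulAction.Quotient.smul_coe, MulAction.Quotient.smul_coe, hu', smul_eq_mul]
      exact QuotientGroup.mk_mul_of_mem _ d.2
  have hdiff : diff l (u • T) ((d : K) • T) = l d ^ D.index := by
    rw [Subgroup.index_eq_card, Nat.card_eq_fintype_card, ← Finset.card_univ, ← Finset.prod_const]
    refine Finset.prod_congr rfl fun q _ => congrArg l (Subtype.ext ?_)
    simp only [Subgroup.smul_apply_eq_smul_apply_inv_smul, hq, hu, smul_eq_mul]
    group
  rw [← hdiff, MonoidHom.transfer_def l T]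
  exact diff_mul_diff l T (u • T) _

end TransversalShift

section Tate

variable {X : Type*} [Group X] {p : ℕ}

lemma eq_one_of_pow_eq_one_of_coprime {a : Multiplicative (ZMod p)} {m : ℕ} (ha : a ^ m = 1)
    (hm : m.Coprime p) : a = 1 := by
  have hcard : Nat.card (Multiplicative (ZMod p)) = p := Nat.card_zmod p
  have hap : a ^ p = 1 := by simpa only [hcard] using pow_card_eq_one' (x := a)
  rw [← pow_one a, ← hm.gcd_eq_one, pow_gcd_eq_one]
  exact ⟨ha, hap⟩

lemma map_eq_one_of_mem_pResidual (φ : X →* Multiplicative (ZMod p)) {x : X}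
    (hx : x ∈ pResidual p X) : φ x = 1 := by
  have hle : pResidual p X ≤ φ.ker := (Subgroup.closure_le _).2 fun y hy =>
    eq_one_of_pow_eq_one_of_coprime (by rw [← map_pow, pow_orderOf_eq_one, map_one]) hy
  exact hle hx

lemma exists_hom_ne_one_of_normal {P : Type*} [Group P] [Finite P] [Fact p.Prime]
    (hP : IsPGroup p P) {N : Subgroup P} [N.Normal] (hN : N ≠ ⊥) :
    ∃ l : N →* Multiplicative (ZMod p), l ≠ 1 ∧
      ∀ (u : P) (d : P) (hd : d ∈ N) (hud : u * d * u⁻¹ ∈ N), l ⟨u * d * u⁻¹, hud⟩ = l ⟨d, hd⟩ := by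
  obtain ⟨M, hMN, hindex, hcomm⟩ := exists_relIndex_eq_prime_of_commutator_le hP hN
  have := normal_of_commutator_top_le hMN hcomm
  let e : N ⧸ M.subgroupOf N ≃* Multiplicative (ZMod p) :=
    mulEquivOfPrimeCardEq (p := p) hindex (Nat.card_zmod p)
  let l : N →* Multiplicative (ZMod p) := e.toMonoidHom.comp (QuotientGroup.mk' _)
  have hker : l.ker = M.subgroupOf N := by
    ext d
    exact (map_eq_one_iff e e.injective).trans (QuotientGroup.eq_one_iff d)
  refine ⟨l, fun hl => ?_, fun u d hd hud => ?_⟩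
  · have hp : p = 1 := by
      rw [← hindex, Subgroup.relIndex, ← hker, hl, MonoidHom.ker_one, Subgroup.index_top]
    exact (Fact.out : p.Prime).ne_one hp
  · rw [← div_eq_one, ← map_div, ← MonoidHom.mem_ker, hker, div_eq_mul_inv]
    exact hcomm (Subgroup.commutator_comm N ⊤ ▸
      Subgroup.commutator_mem_commutator (Subgroup.mem_top u) hd)

variable [Finite X] [Fact p.Prime]

lemma sylow_subgroupOf_ne_bot (P : Sylow p X) (K : Subgroup X) [K.Normal]
    (hK : p ∣ Nat.card K) : K.subgroupOf P ≠ ⊥ := fun hbot =>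
  not_dvd_sylow_relIndex_of_normal P K <| by
    rwa [← Subgroup.inf_relIndex_right, inf_comm, ← Subgroup.subgroupOf_map_subtype, hbot,
      Subgroup.map_bot, Subgroup.relIndex_bot_left]

theorem coprime_card_pResidual_of_forall_exists_extension (P : Sylow p X)
    (hext : ∀ f : P →* Multiplicative (ZMod p),
      ∃ φ : X →* Multiplicative (ZMod p), ∀ x : P, φ x = f x) :
    (Nat.card (pResidual p X)).Coprime p := by
  have hp : p.Prime := Fact.out
  by_contra hcard
  let K := pResidual p X
  let D : Subgroup K := (P : Subgroup X).subgroupOf K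
  have hdvd : p ∣ Nat.card K := by rwa [hp.dvd_iff_not_coprime, Nat.coprime_comm]
  obtain ⟨l, hl, hinv⟩ := exists_hom_ne_one_of_normal P.2 (N := K.subgroupOf P)
    (sylow_subgroupOf_ne_bot P K hdvd)
  let l' : D →* Multiplicative (ZMod p) := l.comp
    { toFun d := ⟨⟨d, d.2⟩, d.1.2⟩
      map_one' := rfl
      map_mul' _ _ := rfl }
  let _ : MulDistribMulAction P K :=
    MulDistribMulAction.compHom K ((MulAut.conjNormal (H := K)).comp (P : Subgroup X).subtype)
  have : MulAction.QuotientAction P D := ⟨fun u a b hab => by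
    rw [← smul_inv', ← smul_mul']
    exact mul_mem (mul_mem u.2 hab) (inv_mem u.2)⟩
  have hl' (u : P) (d : K) (hd : d ∈ D) (hud : u • d ∈ D) : l' ⟨u • d, hud⟩ = l' ⟨d, hd⟩ :=
    hinv u ⟨d, hd⟩ d.2 _
  obtain ⟨φ, hφ⟩ := hext (transversalShift l' hl')
  refine hl (MonoidHom.ext fun d => ?_)
  have hdK : (d : X) ∈ K := Subgroup.mem_subgroupOf.1 d.2
  let d' : D := ⟨⟨d, hdK⟩, d.1.2⟩
  have hd : l d ^ D.index = MonoidHom.transfer l' (d' : K) := by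
    rw [← transversalShift_mul_pow_index hl' (u := d.1) (d := d') fun _ => rfl, ← hφ]
    exact (one_mul (l d ^ D.index)).symm.trans
      (congrArg (· * l d ^ D.index) (map_eq_one_of_mem_pResidual φ hdK).symm)
  have hd' : (d' : K) ∈ pResidual p K :=
    pResidual_pResidual_eq_top (G := X) hp ▸ Subgroup.mem_top _
  rw [map_eq_one_of_mem_pResidual (MonoidHom.transfer l') hd'] at hd
  exact eq_one_of_pow_eq_one_of_coprime hd
    (hp.coprime_iff_not_dvd.2 (not_dvd_sylow_relIndex_of_normal P K)).symm

end Tate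

/-- The homomorphism `f` on the subgroup `P` is fusion-stable at `x` if it sends every `X`-conjugate
of a power `x ^ k` that lies in `P` to `f x ^ k`. The transfer of `f` can then be evaluated at
`x`. -/
def IsFusionStable {X A : Type*} [Group X] [CommGroup A] {P : Subgroup X} (f : P →* A) (x : P) :
    Prop :=
  ∀ (g : X) (k : ℕ) (h : g⁻¹ * (x : X) ^ k * g ∈ P), f ⟨_, h⟩ = f x ^ k

section FusionStable

variable {X : Type*} [Group X]

lemma IsFusionStable.transfer_eq_pow_index {A : Type*} [CommGroup A] {P : Subgroup X}
    [P.FiniteIndex] {f : P →* A} {x : P} (h : IsFusionStable f x) :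
    MonoidHom.transfer f (x : X) = f x ^ P.index := by
  classical
  let _ := P.fintypeQuotientOfFiniteIndex
  rw [MonoidHom.transfer_eq_prod_quotient_orbitRel_zpowers_quot,
    Finset.prod_congr rfl fun q _ => h _ _ _, Finset.prod_pow_eq_pow_sum,
    ← Subgroup.index_eq_sum_minimalPeriod]

lemma transfer_mul {A : Type*} [CommGroup A] {P : Subgroup X} [P.FiniteIndex] (f f' : P →* A) :
    MonoidHom.transfer (f * f') = MonoidHom.transfer f * MonoidHom.transfer f' := by
  ext x
  exact Finset.prod_mul_distrib

-- Restricting the transfer to `P` is an endomorphism of the finite group `Hom(P, ℤ/p)`, which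
-- the stable elements show to be injective.
lemma exists_extension_of_forall_exists_isFusionStable [Finite X] {p : ℕ} [Fact p.Prime]
    (P : Sylow p X)
    (hP : ∀ f : P →* Multiplicative (ZMod p), f ≠ 1 → ∃ x : P, f x ≠ 1 ∧ IsFusionStable f x)
    (f : P →* Multiplicative (ZMod p)) :
    ∃ φ : X →* Multiplicative (ZMod p), ∀ x : P, φ x = f x := by
  let restrictTransfer :=
    MonoidHom.mk' (fun f : P →* Multiplicative (ZMod p) =>
        (MonoidHom.transfer f).comp (P : Subgroup X).subtype)
      fun f f' => by rw [transfer_mul, MonoidHom.mul_comp]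
  have hinj : Function.Injective restrictTransfer := by
    refine (injective_iff_map_eq_one _).2 fun f hf => by_contra fun hne => ?_
    obtain ⟨x, hx, hstable⟩ := hP f hne
    refine hx (eq_one_of_pow_eq_one_of_coprime (hstable.transfer_eq_pow_index.symm.trans
      (DFunLike.congr_fun hf x)) ?_)
    exact ((Fact.out : p.Prime).coprime_iff_not_dvd.2 P.not_dvd_index).symm
  have := DFunLike.finite (P →* Multiplicative (ZMod p))
  obtain ⟨f', rfl⟩ := Finite.surjective_of_injective hinj f
  exact ⟨MonoidHom.transfer f', fun x => rfl⟩

end FusionStable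

section PAutomizer

variable {p n : ℕ}

-- With `C` the fixed points, `q` divides `|D| - |C| = |C| (|D : C| - 1)`, and `|D : C| = p ^ i`.
lemma fixedPoints_eq_top_of_index_dvd {Q D : Type*} [Group Q] [Finite Q] [Group D] [Finite D]
    [MulDistribMulAction Q D] {q : ℕ} (hp : p.Prime) (hq : q.Prime) (hqp : q ≠ p)
    (hQ : IsPGroup q Q) (hD : IsPGroup p D)
    (hcop : (Nat.card Q).Coprime (∏ i ∈ Finset.Icc 1 n, (p ^ i - 1)))
    (hindex : (FixedPoints.subgroup Q D).index ∣ p ^ n) : FixedPoints.subgroup Q D = ⊤ := by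
  have := Fact.mk hp
  have := Fact.mk hq
  obtain hQ1 | hQ1 := subsingleton_or_nontrivial Q
  · exact eq_top_iff.2 fun d _ u => by rw [Subsingleton.elim u 1, one_smul]
  obtain ⟨i, hin, hi⟩ := (Nat.dvd_prime_pow hp).1 hindex
  rw [← Subgroup.index_eq_one, hi]
  by_contra hi1
  have hi0 : 0 < i := Nat.pos_of_ne_zero fun h => hi1 (by rw [h, pow_zero])
  let C := FixedPoints.subgroup Q D
  have hmod : Nat.card C * 1 ≡ Nat.card C * p ^ i [MOD q] := by
    rw [mul_one, ← hi, C.card_mul_index]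
    exact (hQ.card_modEq_card_fixedPoints D).symm
  have hqC : q.Coprime (Nat.card C) := by
    obtain ⟨c, hc⟩ := (hD.to_subgroup C).exists_card_eq
    exact hc ▸ Nat.Coprime.pow_right c ((Nat.coprime_primes hq hp).2 hqp)
  have hdvd : q ∣ p ^ i - 1 :=
    (Nat.modEq_iff_dvd' (Nat.one_le_pow _ _ hp.pos)).1
      (Nat.ModEq.cancel_left_of_coprime hqC hmod)
  have hprod : q ∣ ∏ i ∈ Finset.Icc 1 n, (p ^ i - 1) :=
    hdvd.trans (Finset.dvd_prod_of_mem _ (Finset.mem_Icc.2 ⟨hi0, hin⟩))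
  obtain ⟨m, hm, hcard⟩ := hQ.nontrivial_iff_card.1 hQ1
  exact hq.not_dvd_one (hcop ▸ Nat.dvd_gcd (hcard ▸ dvd_pow_self q hm.ne') hprod)

lemma le_centralizer_of_relIndex_dvd {X : Type*} [Group X] [Finite X] {q : ℕ} (hp : p.Prime)
    (hq : q.Prime) (hqp : q ≠ p) {Q D D₀ : Subgroup X} (hQ : IsPGroup q Q) (hD : IsPGroup p D)
    (hcop : (Nat.card X).Coprime (∏ i ∈ Finset.Icc 1 n, (p ^ i - 1)))
    (hQD : Q ≤ Subgroup.normalizer (D : Set X))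
    (hQD₀ : Q ≤ Subgroup.centralizer (D₀ : Set X)) (hindex : D₀.relIndex D ∣ p ^ n) :
    Q ≤ Subgroup.centralizer (D : Set X) := by
  let _ : MulDistribMulAction Q D :=
    MulDistribMulAction.compHom D (D.normalizerMonoidHom.comp (Subgroup.inclusion hQD))
  have hle : D₀.subgroupOf D ≤ FixedPoints.subgroup Q D := fun d hd u =>
    Subtype.ext (mul_inv_eq_of_eq_mul (Subgroup.mem_centralizer_iff.1 (hQD₀ u.2) d hd).symm)
  have hfix := fixedPoints_eq_top_of_index_dvd hp hq hqp hQ hD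
    (hcop.coprime_dvd_left Q.card_subgroup_dvd_card) ((Subgroup.index_dvd_of_le hle).trans hindex)
  refine fun u hu => Subgroup.mem_centralizer_iff.2 fun d hd => ?_
  have hfixed : (⟨d, hd⟩ : D) ∈ FixedPoints.subgroup Q D := hfix ▸ Subgroup.mem_top _
  exact (mul_inv_eq_iff_eq_mul.1 (congrArg Subtype.val (hfixed ⟨u, hu⟩))).symm

/-- Every `q`-subgroup of `X`, with `q ≠ p` prime, that normalizes `D` also centralizes it. For a
finite group this says that the group `N(D) / C(D)` of automorphisms of `D` induced by `X` is
a `p`-group. -/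
def HasPAutomizer {X : Type*} [Group X] (p : ℕ) (D : Subgroup X) : Prop :=
  ∀ q : ℕ, q.Prime → q ≠ p → ∀ Q : Subgroup X, IsPGroup q Q →
    Q ≤ Subgroup.normalizer (D : Set X) → Q ≤ Subgroup.centralizer (D : Set X)

variable {X : Type*} [Group X]

lemma normalizer_le_centralizer_mul_sylow [Finite X] {D : Subgroup X} (hD : HasPAutomizer p D)
    (S : Sylow p (Subgroup.normalizer (D : Set X))) (h : Subgroup.normalizer (D : Set X)) :
    ∃ z ∈ (Subgroup.centralizer (D : Set X)).subgroupOf (Subgroup.normalizer (D : Set X)),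
      ∃ s ∈ S, z * s = h := by
  let N := Subgroup.normalizer (D : Set X)
  let C := (Subgroup.centralizer (D : Set X)).subgroupOf N
  have : C.Normal := Subgroup.normal_subgroupOf_centralizer_normalizer _
  have htop : C ⊔ S = ⊤ :=
    eq_top_of_sylow_le_of_forall_isPGroup_le S le_sup_right fun q hq hqp Q hQ x hx =>
      Subgroup.mem_sup_left <|
        hD q hq hqp _ (hQ.map N.subtype) (Subgroup.map_subtype_le Q) ⟨x, hx, rfl⟩
  exact Subgroup.mem_sup_of_normal_left.1 (htop ▸ Subgroup.mem_top h)

end PAutomizer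

section Fusion

variable {X : Type*} [Group X] {p : ℕ}

lemma lt_inf_normalizer_of_isPGroup [Finite X] [Fact p.Prime] {R D : Subgroup X}
    (hR : IsPGroup p R) (hlt : D < R) : D < R ⊓ Subgroup.normalizer (D : Set X) := by
  have := hR.isNilpotent
  have hgrow := Group.normalizerCondition_of_isNilpotent (D.subgroupOf R)
    (lt_top_iff_ne_top.2 (mt Subgroup.subgroupOf_eq_top.1 hlt.not_ge))
  rw [← Subgroup.subgroupOf_normalizer_eq hlt.le] at hgrow
  refine lt_of_le_not_ge (le_inf hlt.le Subgroup.le_normalizer) fun hle => hgrow.not_ge ?_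
  exact fun x hx => hle ⟨x.2, hx⟩

lemma inf_eq_inf_of_sylow_inf_le [Finite X] [Fact p.Prime] {P₁ P₂ : Sylow p X} {B : Subgroup X}
    [B.Normal] (h : (P₁ : Subgroup X) ⊓ B ≤ P₂) :
    (P₁ : Subgroup X) ⊓ B = (P₂ : Subgroup X) ⊓ B := by
  let S : Sylow p B :=
    (P₁.2.comap_subtype (K := B)).toSylow (not_dvd_sylow_relIndex_of_normal P₁ B)
  have hS : (S : Subgroup B) = (P₁ : Subgroup X).subgroupOf B := IsPGroup.toSylow_coe _ _
  rw [← Subgroup.subgroupOf_inj, ← hS]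
  exact (S.3 P₂.2.comap_subtype (hS ▸ fun x hx => h ⟨hx, x.2⟩)).symm

lemma exists_centralizer_sylow_of_hasPAutomizer [Finite X] [Fact p.Prime] {D : Subgroup X}
    (hD : HasPAutomizer p D) (P₁ P₂ : Sylow p X) :
    ∃ c ∈ Subgroup.centralizer (D : Set X), ∃ R : Sylow p X,
      (P₁ : Subgroup X) ⊓ Subgroup.normalizer (D : Set X) ≤ R ∧
      (P₂ : Subgroup X) ⊓ Subgroup.normalizer (D : Set X) ≤ (c • R : Sylow p X) := by
  let N := Subgroup.normalizer (D : Set X)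
  obtain ⟨S₁, hS₁⟩ := (P₁.2.comap_subtype (K := N)).exists_le_sylow
  obtain ⟨S₂, hS₂⟩ := (P₂.2.comap_subtype (K := N)).exists_le_sylow
  obtain ⟨g, rfl⟩ := MulAction.exists_smul_eq N S₁ S₂
  obtain ⟨c, hc, s, hs, rfl⟩ := normalizer_le_centralizer_mul_sylow hD S₁ g
  have hsS : s • S₁ = S₁ := Sylow.smul_eq_iff_mem_normalizer.2 (Subgroup.le_normalizer hs)
  rw [mul_smul, hsS, Sylow.coe_subgroup_smul] at hS₂
  obtain ⟨R, hR⟩ := (S₁.2.map N.subtype).exists_le_sylow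
  refine ⟨c, hc, R, fun x hx => hR ⟨⟨x, hx.2⟩, hS₁ hx.1, rfl⟩, fun x hx => ?_⟩
  obtain ⟨y, hy, hyx⟩ := hS₂ (show (⟨x, hx.2⟩ : N) ∈ (P₂ : Subgroup X).subgroupOf N from hx.1)
  rw [Sylow.coe_subgroup_smul]
  exact ⟨y, hR ⟨y, hy, rfl⟩, congrArg Subtype.val hyx⟩

lemma le_normalizer_inf_of_normal (P B : Subgroup X) [B.Normal] :
    P ≤ Subgroup.normalizer ((P ⊓ B : Subgroup X) : Set X) :=
  (le_inf Subgroup.le_normalizer Subgroup.le_normalizer_of_normal).trans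
    Subgroup.inf_normalizer_le_normalizer_inf

lemma exists_centralizer_smul_eq_of_inf_eq [Finite X] [Fact p.Prime] {B : Subgroup X} [B.Normal]
    {P₁ P₂ : Sylow p X} (hD : HasPAutomizer p ((P₁ : Subgroup X) ⊓ B))
    (heq : (P₁ : Subgroup X) ⊓ B = (P₂ : Subgroup X) ⊓ B) :
    ∃ c ∈ Subgroup.centralizer (((P₁ : Subgroup X) ⊓ B : Subgroup X) : Set X), c • P₁ = P₂ := by
  obtain ⟨c, hc, R, hR, hcR⟩ := exists_centralizer_sylow_of_hasPAutomizer hD P₁ P₂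
  rw [inf_eq_left.2 (le_normalizer_inf_of_normal _ B)] at hR
  rw [heq, inf_eq_left.2 (le_normalizer_inf_of_normal _ B)] at hcR
  obtain rfl : R = P₁ := Sylow.ext (P₁.3 R.2 hR)
  exact ⟨c, hc, Sylow.ext (P₂.3 (c • R).2 hcR)⟩

-- Frobenius' argument: enlarge `P₁ ⊓ P₂ ⊓ B` inside its normalizer.
theorem exists_centralizer_smul_eq_of_forall_hasPAutomizer [Finite X] [Fact p.Prime]
    {B : Subgroup X} [B.Normal] (hB : ∀ D ≤ B, IsPGroup p D → HasPAutomizer p D)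
    (P₁ P₂ : Sylow p X) :
    ∃ c ∈ Subgroup.centralizer (((P₁ : Subgroup X) ⊓ P₂ ⊓ B : Subgroup X) : Set X),
      c • P₁ = P₂ := by
  generalize hD : (P₁ : Subgroup X) ⊓ P₂ ⊓ B = D
  induction D using WellFoundedGT.induction generalizing P₁ P₂ with
  | ind D ih =>
    have hDB : D ≤ B := hD ▸ inf_le_right
    have hDP₁ : D ≤ P₁ := hD ▸ inf_le_left.trans inf_le_left
    have hDP₂ : D ≤ P₂ := hD ▸ inf_le_left.trans inf_le_right
    have hDp : HasPAutomizer p D := hB D hDB (P₁.2.to_le hDP₁)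
    by_cases heq : (P₁ : Subgroup X) ⊓ B = (P₂ : Subgroup X) ⊓ B
    · have hD₁ : (P₁ : Subgroup X) ⊓ B = D := by rw [← hD, inf_inf_distrib_right, ← heq, inf_idem]
      exact hD₁ ▸ exists_centralizer_smul_eq_of_inf_eq (hD₁ ▸ hDp) heq
    · obtain ⟨c, hc, R, hR, hcR⟩ := exists_centralizer_sylow_of_hasPAutomizer hDp P₁ P₂
      have hlt₁ : D < (P₁ : Subgroup X) ⊓ B := lt_of_le_not_ge (le_inf hDP₁ hDB) fun h =>
        heq (inf_eq_inf_of_sylow_inf_le (h.trans hDP₂))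
      have hlt₂ : D < (P₂ : Subgroup X) ⊓ B := lt_of_le_not_ge (le_inf hDP₂ hDB) fun h =>
        heq (inf_eq_inf_of_sylow_inf_le (h.trans hDP₁)).symm
      have hgrow₁ : D < (P₁ : Subgroup X) ⊓ R ⊓ B :=
        (lt_inf_normalizer_of_isPGroup (P₁.2.to_le inf_le_left) hlt₁).trans_le fun x hx =>
          ⟨⟨hx.1.1, hR ⟨hx.1.1, hx.2⟩⟩, hx.1.2⟩
      have hgrow₂ : D < ((c • R : Sylow p X) : Subgroup X) ⊓ P₂ ⊓ B :=
        (lt_inf_normalizer_of_isPGroup (P₂.2.to_le inf_le_left) hlt₂).trans_le fun x hx =>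
          ⟨⟨hcR ⟨hx.1.1, hx.2⟩, hx.1.1⟩, hx.1.2⟩
      obtain ⟨c₁, hc₁, rfl⟩ := ih _ hgrow₁ P₁ R rfl
      obtain ⟨c₂, hc₂, rfl⟩ := ih _ hgrow₂ (c • c₁ • P₁) P₂ rfl
      exact ⟨c₂ * c * c₁, mul_mem (mul_mem (Subgroup.centralizer_le hgrow₂.le hc₂) hc)
        (Subgroup.centralizer_le hgrow₁.le hc₁), by rw [mul_smul, mul_smul]⟩

/-- `P` controls the fusion of `x`: every `X`-conjugate of `x` lying in `P` is already
a `P`-conjugate. -/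
def IsFusionControlled (P : Subgroup X) (x : X) : Prop :=
  ∀ g : X, g⁻¹ * x * g ∈ P → ∃ u ∈ P, g⁻¹ * x * g = u⁻¹ * x * u

theorem isFusionControlled_of_forall_hasPAutomizer [Finite X] [Fact p.Prime] (P : Sylow p X)
    {B : Subgroup X} [B.Normal] (hB : ∀ D ≤ B, IsPGroup p D → HasPAutomizer p D) {x : X}
    (hxP : x ∈ P) (hxB : x ∈ B) : IsFusionControlled (P : Subgroup X) x := by
  intro g hg
  let D := (P : Subgroup X) ⊓ B
  have hxg : x ∈ (g • P : Sylow p X) := by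
    rw [← SetLike.mem_coe, Sylow.coe_smul, Set.mem_smul_set_iff_inv_smul_mem, ← map_inv,
      MulAut.smul_def, MulAut.conj_apply, inv_inv]
    exact hg
  obtain ⟨c, hc, hcP⟩ := exists_centralizer_smul_eq_of_forall_hasPAutomizer hB P (g • P)
  have hn : c⁻¹ * g ∈ Subgroup.normalizer (D : Set X) := by
    refine Subgroup.inf_normalizer_le_normalizer_inf
      ⟨Sylow.smul_eq_iff_mem_normalizer.1 ?_, Subgroup.normalizer_eq_top B ▸ Subgroup.mem_top _⟩
    rw [mul_smul, ← hcP, inv_smul_smul]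
  obtain ⟨z, hz, s, hs, hzs⟩ := normalizer_le_centralizer_mul_sylow
    (hB D inf_le_right (P.2.to_le inf_le_left))
    (P.subtype (le_normalizer_inf_of_normal (P : Subgroup X) B)) ⟨_, hn⟩
  have hcx : x * c = c * x := Subgroup.mem_centralizer_iff.1 hc x ⟨⟨hxP, hxg⟩, hxB⟩
  have hzx : x * z = z * x := Subgroup.mem_centralizer_iff.1 hz x ⟨hxP, hxB⟩
  have hgs : g = c * z * s := by
    rw [mul_assoc, ← Subgroup.coe_mul, hzs, mul_inv_cancel_left]
  refine ⟨s, hs, ?_⟩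
  calc g⁻¹ * x * g = (s : X)⁻¹ * ((z : X)⁻¹ * (c⁻¹ * (x * c) * z)) * s := by rw [hgs]; group
    _ = (s : X)⁻¹ * x * s := by rw [hcx, inv_mul_cancel_left, hzx, inv_mul_cancel_left]

end Fusion

lemma isFusionStable_of_forall_isFusionControlled {L M : Type*} [Group L] [CommGroup M]
    {P A : Subgroup L} [A.Normal] {f : P →* M} (hf : A.subgroupOf P ≤ f.ker) {x : P}
    (hx : ∀ k : ℕ, IsFusionControlled (P.map (QuotientGroup.mk' A)) ((x : L) ^ k : L)) :
    IsFusionStable f x := by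
  intro g k h
  obtain ⟨_, ⟨u, hu, rfl⟩, huv⟩ := hx k g ⟨_, h, rfl⟩
  let v : P := ⟨u, hu⟩
  have hmem : ⟨_, h⟩ * (v⁻¹ * x ^ k * v)⁻¹ ∈ f.ker := by
    refine hf (Subgroup.mem_subgroupOf.2 ((QuotientGroup.eq_one_iff (N := A) _).1 ?_))
    change QuotientGroup.mk' A (g⁻¹ * (x : L) ^ k * g * (u⁻¹ * (x : L) ^ k * u)⁻¹) = 1
    rw [map_mul, map_inv, mul_inv_eq_one]
    exact huv
  rw [MonoidHom.mem_ker, map_mul, map_inv, mul_inv_eq_one] at hmem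
  rw [hmem, map_mul, map_mul, map_inv, map_pow, mul_comm, mul_inv_cancel_left]

section SPermutable

variable {G : Type*} [Group G]

lemma coe_sup_eq_mul_of_mul_comm {H K : Subgroup G}
    (h : (H : Set G) * (K : Set G) = (K : Set G) * (H : Set G)) :
    ((H ⊔ K : Subgroup G) : Set G) = (H : Set G) * (K : Set G) := by
  have hmul : ((H : Set G) * K) * (H * K) = H * K := by
    rw [mul_assoc, ← mul_assoc (K : Set G), ← h, mul_assoc, coe_mul_coe, ← mul_assoc, coe_mul_coe]
  let J : Subgroup G :=
    { carrier := (H : Set G) * (K : Set G)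
      one_mem' := ⟨1, H.one_mem, 1, K.one_mem, mul_one 1⟩
      mul_mem' := fun ha hb => hmul ▸ Set.mul_mem_mul ha hb
      inv_mem' := fun ha => by
        rwa [← Set.mem_inv, mul_inv_rev, inv_coe_set, inv_coe_set, ← h] }
  rw [Subgroup.sup_eq_closure_mul]
  exact congrArg SetLike.coe J.closure_eq

lemma isSylowIn_top_iff_exists_sylow [Finite G] {q : ℕ} [Fact q.Prime] {Q : Subgroup G} :
    IsSylowIn q Q ⊤ ↔ ∃ S : Sylow q G, (S : Subgroup G) = Q := by
  have hindex : (Q.subgroupOf ⊤).index = Q.index := Q.relIndex_top_right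
  constructor
  · rintro ⟨-, hQ, hdvd⟩
    exact ⟨hQ.toSylow (hindex ▸ hdvd), IsPGroup.toSylow_coe _ _⟩
  · rintro ⟨S, rfl⟩
    exact ⟨le_top, S.2, hindex ▸ S.not_dvd_index⟩

lemma SPermutable.mul_sylow_comm [Finite G] {H : Subgroup G} (h : SPermutable H) {q : ℕ}
    [hq : Fact q.Prime] (Q : Sylow q G) :
    (H : Set G) * (Q : Subgroup G) = ((Q : Subgroup G) : Set G) * H :=
  h q hq.out Q (isSylowIn_top_iff_exists_sylow.2 ⟨Q, rfl⟩)

lemma SPermutable.map [Finite G] {G' : Type*} [Group G'] {H : Subgroup G} (h : SPermutable H)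
    {φ : G →* G'} (hφ : Function.Surjective φ) : SPermutable (H.map φ) := by
  intro q hq Q hQ
  have := Fact.mk hq
  have := Finite.of_surjective φ hφ
  obtain ⟨S, rfl⟩ := isSylowIn_top_iff_exists_sylow.1 hQ
  obtain ⟨R, rfl⟩ := Sylow.mapSurjective_surjective hφ q S
  rw [Sylow.coe_mapSurjective, Subgroup.coe_map, Subgroup.coe_map, ← Set.image_mul,
    ← Set.image_mul, h.mul_sylow_comm R]

variable [Finite G] {p : ℕ} [Fact p.Prime]

lemma SPermutable.le_sylow {H : Subgroup G} (h : SPermutable H) (hH : IsPGroup p H)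
    (R : Sylow p G) : H ≤ R := by
  have hindex : (R : Subgroup G).relIndex H = (R : Subgroup G).relIndex (H ⊔ R) :=
    relIndex_eq_of_subset_mul le_sup_left (coe_sup_eq_mul_of_mul_comm (h.mul_sylow_comm R)).subset
  obtain ⟨k, hk⟩ : ∃ k, (R : Subgroup G).relIndex H = p ^ k := hH.index _
  rw [← Subgroup.relIndex_eq_one, hk, Nat.pow_eq_one]
  refine or_iff_not_imp_right.2 fun hk0 => absurd ?_ R.not_dvd_index
  calc p ∣ (R : Subgroup G).relIndex (H ⊔ R) := hindex ▸ hk ▸ dvd_pow_self p hk0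
    _ ∣ (R : Subgroup G).index := Dvd.intro _ (Subgroup.relIndex_mul_index le_sup_right)

lemma SPermutable.le_normalizer_of_isPGroup {H : Subgroup G} (h : SPermutable H)
    (hH : IsPGroup p H) {q : ℕ} (hq : q.Prime) (hqp : q ≠ p) {Q : Subgroup G} (hQ : IsPGroup q Q) :
    Q ≤ Subgroup.normalizer (H : Set G) := by
  have := Fact.mk hq
  obtain ⟨S, hS⟩ := hQ.exists_le_sylow
  refine hS.trans (Subgroup.le_normalizer_iff.2 fun g hg a ha => ?_)
  obtain ⟨b, hb, y, hy, hby⟩ : g * a ∈ (H : Set G) * (S : Set G) :=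
    h.mul_sylow_comm S ▸ Set.mul_mem_mul hg ha
  have hconj : g * a * g⁻¹ = b * (y * g⁻¹) := by rw [← mul_assoc]; exact congrArg (· * g⁻¹) hby.symm
  let R : Sylow p G := default
  have hyR : y * g⁻¹ ∈ (R : Subgroup G) := by
    have hgR : g * a * g⁻¹ ∈ (R : Subgroup G) := by
      have haR := h.le_sylow hH (g⁻¹ • R) ha
      rwa [Sylow.coe_subgroup_smul, Subgroup.mem_pointwise_smul_iff_inv_smul_mem, ← map_inv,
        inv_inv, MulAut.smul_def, MulAut.conj_apply] at haR
    rwa [hconj, mul_mem_cancel_left (h.le_sylow hH R hb)] at hgR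
  have hdisj := IsPGroup.disjoint_of_ne q p hqp _ _ S.2 R.2
  rw [hconj, Subgroup.disjoint_def.1 hdisj (mul_mem hy (inv_mem hg)) hyR, mul_one]
  exact hb

lemma SPermutable.le_normalizer_sup_of_isPGroup {H T : Subgroup G} [T.Normal]
    (h : SPermutable (H ⊔ T)) (hH : IsPGroup p H) {q : ℕ} (hq : q.Prime) (hqp : q ≠ p)
    {Q : Subgroup G} (hQ : IsPGroup q Q) :
    Q ≤ Subgroup.normalizer ((H ⊔ T : Subgroup G) : Set G) := by
  let π := QuotientGroup.mk' T
  have hπ : Function.Surjective π := QuotientGroup.mk'_surjective T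
  have hmap : (H ⊔ T).map π = H.map π := by
    rw [Subgroup.map_sup, QuotientGroup.map_mk'_self, sup_bot_eq]
  have hcomap : (H.map π).comap π = H ⊔ T := by
    rw [Subgroup.comap_map_eq, QuotientGroup.ker_mk']
  have hle := (hmap ▸ h.map hπ).le_normalizer_of_isPGroup (hH.map π) hq hqp (hQ.map π)
  rw [← hcomap, ← Subgroup.comap_normalizer_eq_of_surjective _ hπ]
  exact Subgroup.map_le_iff_le_comap.1 hle

lemma SPermutable.le_normalizer_sup {L H T : Subgroup G} [T.Normal] (h : SPermutable (H ⊔ T))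
    (hH : IsPGroup p H) (P : Sylow p L)
    (hP : (P : Subgroup L).map L.subtype ≤ Subgroup.normalizer (H : Set G)) :
    L ≤ Subgroup.normalizer ((H ⊔ T : Subgroup G) : Set G) := by
  refine Subgroup.subgroupOf_eq_top.1 (eq_top_of_sylow_le_of_forall_isPGroup_le P ?_ ?_)
  · exact Subgroup.map_le_iff_le_comap.1 (hP.trans Subgroup.normalizer_le_normalizer_sup_normal)
  · exact fun q hq hqp Q hQ => Subgroup.map_le_iff_le_comap.1
      (h.le_normalizer_sup_of_isPGroup hH hq hqp (hQ.map L.subtype))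

end SPermutable

/-- `N` is the last term of a series of normal subgroups of `X` that starts at `⊥` and whose factors
have order `1` or a prime. Trivial factors are allowed so that intersecting such a series
with, or multiplying it by, a fixed normal subgroup gives a series again. -/
inductive HasPrimeNormalSeries {X : Type*} [Group X] : Subgroup X → Prop
  | bot : HasPrimeNormalSeries ⊥
  | step (M N : Subgroup X) (r : ℕ) : HasPrimeNormalSeries M → N.Normal → M ≤ N → r.Prime →
      M.relIndex N ∣ r → HasPrimeNormalSeries N

section Hypercenter

variable {X : Type*} [Group X]

lemma HasPrimeNormalSeries.normal {N : Subgroup X} (h : HasPrimeNormalSeries N) : N.Normal := by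
  cases h with
  | bot => infer_instance
  | step _ _ _ _ hN => exact hN

lemma HasPrimeNormalSeries.sup {M N : Subgroup X} (hM : HasPrimeNormalSeries M)
    (hN : HasPrimeNormalSeries N) : HasPrimeNormalSeries (M ⊔ N) := by
  induction hN with
  | bot => rwa [sup_bot_eq]
  | step N₁ N₂ r hN₁ hN₂ hle hr hdvd ih =>
    have := hM.normal
    have := hN₁.normal
    refine .step (M ⊔ N₁) (M ⊔ N₂) r ih inferInstance (sup_le_sup_left hle M) hr ?_
    rw [← sup_eq_right.2 hle, ← sup_assoc, Subgroup.relIndex_sup_left]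
    exact (Subgroup.relIndex_dvd_of_le_left N₂ le_sup_right).trans hdvd

lemma hasPrimeNormalSeries_of_forall_isChiefFactor [Finite X] (N : Subgroup X) (hN : N.Normal)
    (h : ∀ A B : Subgroup X, IsChiefFactor A B → A ≤ N → (B.relIndex A).Prime) :
    HasPrimeNormalSeries N := by
  induction N using WellFoundedLT.induction with
  | ind N ih =>
    obtain rfl | hbot := eq_or_ne N ⊥
    · exact .bot
    obtain ⟨B, -, ⟨hB, hBN⟩, hmax⟩ := Finite.exists_le_maximal
      (p := fun B : Subgroup X => B.Normal ∧ B < N) ⟨inferInstance, bot_lt_iff_ne_bot.2 hbot⟩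
    have hchief : IsChiefFactor N B :=
      ⟨hN, hB, hBN, fun K hK hBK hKN => hBK.not_ge (hmax ⟨hK, hKN⟩ hBK.le)⟩
    exact .step B N _ (ih B hBN hB fun A C hAC hA => h A C hAC (hA.trans hBN.le)) hN hBN.le
      (h N B hchief le_rfl) dvd_rfl

lemma exists_hasPrimeNormalSeries_uHypercenter_le [Finite X] :
    ∃ M : Subgroup X, HasPrimeNormalSeries M ∧ UHypercenter X ≤ M := by
  obtain ⟨M, -, hM, hmax⟩ := Finite.exists_le_maximal (HasPrimeNormalSeries.bot (X := X))
  refine ⟨M, hM, sSup_le fun N ⟨hN, hchief⟩ => le_sup_right.trans (hmax ?_ le_sup_left)⟩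
  exact hM.sup (hasPrimeNormalSeries_of_forall_isChiefFactor N hN hchief)

lemma HasPrimeNormalSeries.le_centralizer_inf [Finite X] {p q n : ℕ} {M D Q : Subgroup X}
    (hM : HasPrimeNormalSeries M) (hn : 1 ≤ n) (hp : p.Prime) (hq : q.Prime) (hqp : q ≠ p)
    (hQ : IsPGroup q Q) (hD : IsPGroup p D)
    (hcop : (Nat.card X).Coprime (∏ i ∈ Finset.Icc 1 n, (p ^ i - 1)))
    (hQD : Q ≤ Subgroup.normalizer (D : Set X)) :
    Q ≤ Subgroup.centralizer ((D ⊓ M : Subgroup X) : Set X) := by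
  induction hM with
  | bot =>
    rw [inf_bot_eq]
    exact fun u _ => Subgroup.mem_centralizer_iff.2 fun d hd => by
      rw [Subgroup.mem_bot.1 hd, one_mul, mul_one]
  | step M N r hM hN hle hr hdvd ih =>
    have := hM.normal
    have hDN : IsPGroup p (D ⊓ N : Subgroup X) := hD.to_le inf_le_left
    refine le_centralizer_of_relIndex_dvd hp hq hqp hQ hDN hcop ?_ ih ?_
    · exact (le_inf hQD Subgroup.le_normalizer_of_normal).trans
        Subgroup.inf_normalizer_le_normalizer_inf
    have hrel : (D ⊓ M).relIndex (D ⊓ N) = M.relIndex (D ⊓ N) := by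
      rw [← Subgroup.inf_relIndex_left (D ⊓ N) M, inf_assoc, inf_eq_right.2 hle]
    have := Fact.mk hp
    obtain ⟨k, hk⟩ : ∃ k, M.relIndex (D ⊓ N) = p ^ k := hDN.index _
    have hkr : p ^ k ∣ r := hk ▸ (relIndex_dvd_of_le_of_normal_subgroupOf inf_le_right).trans hdvd
    have hk1 : k ≤ 1 := by
      obtain h1 | hr' := (Nat.dvd_prime hr).1 hkr
      · exact ((Nat.pow_eq_one.1 h1).resolve_left hp.ne_one).trans_le zero_le_one
      · exact (Nat.Prime.eq_one_of_pow (hr' ▸ hr)).le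
    exact hrel ▸ hk ▸ pow_dvd_pow p (hk1.trans hn)

lemma hasPAutomizer_of_uHypercenter_relIndex_dvd [Finite X] {p n : ℕ} {D : Subgroup X}
    (hn : 1 ≤ n) (hp : p.Prime) (hD : IsPGroup p D)
    (hcop : (Nat.card X).Coprime (∏ i ∈ Finset.Icc 1 n, (p ^ i - 1)))
    (hindex : (UHypercenter X).relIndex D ∣ p ^ n) : HasPAutomizer p D := by
  intro q hq hqp Q hQ hQD
  obtain ⟨M, hM, hle⟩ := exists_hasPrimeNormalSeries_uHypercenter_le (X := X)
  refine le_centralizer_of_relIndex_dvd hp hq hqp hQ hD hcop hQD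
    (hM.le_centralizer_inf hn hp hq hqp hQ hD hcop hQD) ?_
  rw [Subgroup.inf_relIndex_left]
  exact (Subgroup.relIndex_dvd_of_le_left D hle).trans hindex

lemma HasPAutomizer.of_map {Y : Type*} [Group Y] {p : ℕ} {φ : X →* Y} (hφ : Function.Injective φ)
    {D : Subgroup X} (h : HasPAutomizer p (D.map φ)) : HasPAutomizer p D := by
  intro q hq hqp Q hQ hQD
  have hcent := h q hq hqp (Q.map φ) (hQ.map φ)
    ((Subgroup.map_mono hQD).trans (Subgroup.le_normalizer_map φ))
  refine fun u hu => Subgroup.mem_centralizer_iff.2 fun d hd => hφ ?_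
  rw [map_mul, map_mul]
  exact Subgroup.mem_centralizer_iff.1 (hcent ⟨u, hu, rfl⟩) (φ d) ⟨d, hd, rfl⟩

lemma uHypercenter_normal : (UHypercenter X).Normal :=
  Subgroup.sSup_normal _ fun _ hN => hN.1

end Hypercenter

section StableElements

variable {L M : Type*} [Group L] [CommGroup M] {p n : ℕ}

lemma isFusionStable_of_mem_normalizer {N P : Subgroup L} (hdisj : Disjoint N P)
    (hmul : (N : Set L) * (P : Set L) = Set.univ) (f : P →* M) {x : P}
    (hx : (x : L) ∈ Subgroup.normalizer (N : Set L)) : IsFusionStable f x := by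
  intro g k h
  obtain ⟨m, hm, w, hw, rfl⟩ : g ∈ (N : Set L) * (P : Set L) := hmul ▸ Set.mem_univ g
  have hxk := pow_mem hx k
  have hmP : m⁻¹ * (x : L) ^ k * m ∈ P := by
    simpa only [mul_inv_rev, mul_assoc, mul_inv_cancel_left, mul_inv_cancel, mul_one]
      using mul_mem (mul_mem hw h) (inv_mem hw)
  have hcomm : m⁻¹ * ((x : L) ^ k * m * ((x : L) ^ k)⁻¹) = 1 := by
    refine Subgroup.disjoint_def.1 hdisj
      (mul_mem (inv_mem hm) ((Subgroup.mem_normalizer_iff.1 hxk m).1 hm)) ?_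
    simpa only [mul_assoc] using mul_mem hmP (inv_mem (pow_mem x.2 k))
  have hconj : (⟨_, h⟩ : P) = (⟨w, hw⟩ : P)⁻¹ * x ^ k * ⟨w, hw⟩ := by
    refine Subtype.ext ?_
    have hxm : (x : L) ^ k * m = m * (x : L) ^ k := by
      rwa [inv_mul_eq_one, eq_mul_inv_iff_mul_eq, eq_comm] at hcomm
    calc (m * w)⁻¹ * (x : L) ^ k * (m * w) = w⁻¹ * m⁻¹ * ((x : L) ^ k * m) * w := by group
      _ = w⁻¹ * (x : L) ^ k * w := by rw [hxm]; group
  rw [hconj, map_mul, map_mul, map_inv, map_pow, mul_right_comm, inv_mul_cancel, one_mul]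

variable [Finite L] [Fact p.Prime]

lemma map_subtype_mul_sylow_eq_univ {T : Subgroup L} (N : Subgroup T) [N.Normal] {k : ℕ}
    (hN : N.index = p ^ k) (P : Sylow p L)
    (hT : ((P : Subgroup L) : Set L) * (T : Set L) = Set.univ) :
    ((N.map T.subtype : Subgroup L) : Set L) * ((P : Subgroup L) : Set L) = Set.univ := by
  have hT' : (T : Set L) * ((P : Subgroup L) : Set L) = Set.univ := by
    rw [← Set.inv_univ, ← hT, mul_inv_rev, inv_coe_set, inv_coe_set]
  have hindex : (P : Subgroup L).relIndex T = (P : Subgroup L).index :=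
    (relIndex_eq_of_subset_mul le_top (hT'.ge.trans' (Set.subset_univ _))).trans
      (P : Subgroup L).relIndex_top_right
  have hcop : N.index.Coprime (P : Subgroup L).index := by
    rw [hN]
    exact Nat.Coprime.pow_left k (((Fact.out : p.Prime).coprime_iff_not_dvd).2 P.not_dvd_index)
  have htop : N ⊔ (P : Subgroup L).subgroupOf T = ⊤ :=
    Subgroup.index_eq_one.1 (Nat.eq_one_of_dvd_coprimes hcop
      (Subgroup.index_dvd_of_le le_sup_left)
      ((Subgroup.index_dvd_of_le le_sup_right).trans hindex.dvd))
  refine Set.eq_univ_of_forall fun g => ?_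
  obtain ⟨t, ht, u, hu, rfl⟩ : g ∈ (T : Set L) * ((P : Subgroup L) : Set L) := hT' ▸ Set.mem_univ g
  obtain ⟨m, hm, v, hv, hmv⟩ := Subgroup.mem_sup_of_normal_left.1
    (htop ▸ Subgroup.mem_top (⟨t, ht⟩ : T))
  refine ⟨m, ⟨m, hm, rfl⟩, v * u, mul_mem hv hu, ?_⟩
  change (m : L) * (v * u) = t * u
  rw [← mul_assoc, ← Subgroup.coe_mul, hmv]

lemma HasPNilpotentSupplement.exists_isFusionStable {K : Subgroup L}
    (hK : HasPNilpotentSupplement p K) (P : Sylow p L) (hKP : K ≤ P) {f : P →* M} (hf : f ≠ 1)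
    (hKf : K.subgroupOf P ≤ f.ker) : ∃ x : P, f x ≠ 1 ∧ IsFusionStable f x := by
  obtain ⟨T, ⟨N, hN, hNcop, k, hNindex⟩, hKT⟩ := hK
  obtain ⟨y, hy⟩ := DFunLike.ne_iff.1 hf
  obtain ⟨u, hu, t, ht, hut⟩ : (y : L) ∈ (K : Set L) * (T : Set L) := hKT ▸ Set.mem_univ _
  let v : P := ⟨u, hKP hu⟩
  have htP : t ∈ (P : Subgroup L) :=
    eq_inv_mul_of_mul_eq hut ▸ mul_mem (inv_mem v.2) y.2
  refine ⟨⟨t, htP⟩, fun hft => hy ?_, isFusionStable_of_mem_normalizer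
    (N := N.map T.subtype) ?_ (map_subtype_mul_sylow_eq_univ N hNindex P ?_) f ?_⟩
  · have hyv : y = v * ⟨t, htP⟩ := Subtype.ext hut.symm
    have hfv : f v = 1 := hKf hu
    rw [hyv, map_mul, hfv, hft, one_mul, MonoidHom.one_apply]
  · refine Subgroup.disjoint_of_coprime_natCard ?_
    obtain ⟨a, ha⟩ := P.2.exists_card_eq
    rw [Subgroup.card_subtype, ha]
    exact hNcop.pow_right a
  · exact Set.eq_univ_of_univ_subset (hKT.ge.trans (Set.mul_subset_mul_right hKP))
  · exact Subgroup.le_normalizer_map T.subtype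
      ⟨⟨t, ht⟩, Subgroup.le_normalizer_of_normal (Subgroup.mem_top _), rfl⟩

lemma isFusionStable_of_forall_hasPAutomizer (P : Sylow p L) {A : Subgroup L} [A.Normal]
    {B : Subgroup (L ⧸ A)} [B.Normal] (hB : ∀ D ≤ B, IsPGroup p D → HasPAutomizer p D)
    {f : P →* M} (hf : A.subgroupOf P ≤ f.ker) {x : P} (hx : ((x : L) : L ⧸ A) ∈ B) :
    IsFusionStable f x := by
  refine isFusionStable_of_forall_isFusionControlled hf fun k => ?_
  have hsurj := QuotientGroup.mk'_surjective A
  rw [← Sylow.coe_mapSurjective hsurj P]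
  refine isFusionControlled_of_forall_hasPAutomizer _ hB ?_ (pow_mem hx k)
  rw [← SetLike.mem_coe, ← Sylow.coe_coe, Sylow.coe_mapSurjective]
  exact ⟨(x : L) ^ k, pow_mem x.2 k, rfl⟩

lemma isFusionStable_of_relIndex_dvd (hn : 1 ≤ n)
    (hcop : (Nat.card L).Coprime (∏ i ∈ Finset.Icc 1 n, (p ^ i - 1))) (P : Sylow p L)
    (A : Subgroup L) [A.Normal] (hA : A.relIndex P ∣ p ^ n) {f : P →* M}
    (hf : A.subgroupOf P ≤ f.ker) (x : P) : IsFusionStable f x := by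
  refine isFusionStable_of_forall_hasPAutomizer P (A := A) (B := ⊤) (fun D _ hD => ?_) hf
    (Subgroup.mem_top _)
  refine hasPAutomizer_of_uHypercenter_relIndex_dvd hn Fact.out hD
    (hcop.coprime_dvd_left (Subgroup.card_quotient_dvd_card A)) ?_
  have hDA : Nat.card D ∣ (QuotientGroup.mk' A).ker.relIndex P :=
    card_dvd_relIndex_ker_of_sylow _ P hD (by rw [QuotientGroup.range_mk']; exact le_top)
  rw [QuotientGroup.ker_mk'] at hDA
  exact ((Subgroup.relIndex_dvd_card _ _).trans hDA).trans hA

end StableElements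

section UsQuasinormal

variable {G : Type*} [Group G] [Finite G] {p n : ℕ} [Fact p.Prime]
  {M : Type*} [CommGroup M] {L : Subgroup G} {K : Subgroup L}

lemma isFusionStable_of_mem_of_inf_le_uHypercenter (hn : 1 ≤ n)
    (hcop : (Nat.card G).Coprime (∏ i ∈ Finset.Icc 1 n, (p ^ i - 1))) (P : Sylow p L)
    [(K.subgroupOf P).Normal] (hindex : K.relIndex P ∣ p ^ n) {T : Subgroup G} [T.Normal]
    (hT : ∀ x ∈ K.map L.subtype ⊓ T,
      (x : G ⧸ (K.map L.subtype).normalCore) ∈ UHypercenter (G ⧸ (K.map L.subtype).normalCore))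
    {f : P →* M} (hf : K.subgroupOf P ≤ f.ker) {x : P} (hx : ((x : L) : G) ∈ T) :
    IsFusionStable f x := by
  let C := (K.map L.subtype).normalCore
  let ι := QuotientGroup.map (C.subgroupOf L) C L.subtype le_rfl
  have : (UHypercenter (G ⧸ C)).Normal := uHypercenter_normal
  have hCK : C.subgroupOf L ≤ K := by
    rw [← Subgroup.comap_map_eq_self_of_injective L.subtype_injective K]
    exact Subgroup.comap_mono (Subgroup.normalCore_le _)
  have hB : ((T.subgroupOf L).map (QuotientGroup.mk' (C.subgroupOf L))).Normal :=
    Subgroup.Normal.map inferInstance _ (QuotientGroup.mk'_surjective _)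
  refine isFusionStable_of_forall_hasPAutomizer P (A := C.subgroupOf L)
    (B := (T.subgroupOf L).map (QuotientGroup.mk' (C.subgroupOf L))) (fun D hDT hD => ?_)
    ((Subgroup.comap_mono hCK).trans hf) ⟨x, hx, rfl⟩
  refine HasPAutomizer.of_map (quotientMap_subgroupOf_injective L C)
    (hasPAutomizer_of_uHypercenter_relIndex_dvd hn Fact.out (hD.map ι)
      (hcop.coprime_dvd_left (Subgroup.card_quotient_dvd_card C)) (dvd_trans ?_ hindex))
  refine relIndex_dvd_of_sylow_of_le_map P (T.subgroupOf L)
    ((QuotientGroup.mk' C).comp L.subtype) (UHypercenter (G ⧸ C))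
    (fun y hy => hT y ⟨⟨y, hy.1, rfl⟩, hy.2⟩) ?_
    (hD.map ι)
  exact (Subgroup.map_mono hDT).trans (Subgroup.map_map _ _ _).le

lemma UsQuasinormal.exists_isFusionStable (hn : 1 ≤ n)
    (hcop : (Nat.card G).Coprime (∏ i ∈ Finset.Icc 1 n, (p ^ i - 1)))
    (hK : UsQuasinormal (K.map L.subtype)) (P : Sylow p L) (hKP : K ≤ P)
    [hKn : (K.subgroupOf P).Normal] (hindex : K.relIndex P ∣ p ^ n) {f : P →* M} (hf : f ≠ 1)
    (hKf : K.subgroupOf P ≤ f.ker) : ∃ x : P, f x ≠ 1 ∧ IsFusionStable f x := by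
  obtain ⟨T, hT, hperm, hcenter⟩ := hK
  by_cases! hfT : ∃ x : P, ((x : L) : G) ∈ T ∧ f x ≠ 1
  · obtain ⟨x, hxT, hfx⟩ := hfT
    exact ⟨x, hfx, isFusionStable_of_mem_of_inf_le_uHypercenter hn hcop P hindex hcenter hKf hxT⟩
  · obtain ⟨x, hfx⟩ := DFunLike.ne_iff.1 hf
    let A := (K.map L.subtype ⊔ T).subgroupOf L
    have hKA : K ≤ A := Subgroup.map_le_iff_le_comap.1 le_sup_left
    have hnormalizer : (P : Subgroup L).map L.subtype ≤
        Subgroup.normalizer ((K.map L.subtype : Subgroup G) : Set G) :=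
      (Subgroup.map_mono (Subgroup.le_normalizer_of_normal_subgroupOf hKP)).trans
        (Subgroup.le_normalizer_map _)
    have hA : A.Normal := Subgroup.normal_subgroupOf_of_le_normalizer
      (hperm.le_normalizer_sup ((P.2.to_le hKP).map _) P hnormalizer)
    have hAf : A.subgroupOf P ≤ f.ker := by
      intro y hy
      obtain ⟨_, ⟨k, hk, rfl⟩, t, ht, hkt⟩ := Subgroup.mem_sup_of_normal_right.1 hy
      let u : P := ⟨k, hKP hk⟩
      have hut : (((u⁻¹ * y : P) : L) : G) = t := inv_mul_eq_of_eq_mul hkt.symm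
      have hfu : f u = 1 := hKf hk
      have hfuy : f (u⁻¹ * y) = 1 := hfT _ (hut ▸ ht)
      rwa [map_mul, map_inv, hfu, inv_one, one_mul] at hfuy
    exact ⟨x, hfx, isFusionStable_of_relIndex_dvd hn
      (hcop.coprime_dvd_left (Subgroup.card_subgroup_dvd_card L)) P A
      ((Subgroup.relIndex_dvd_of_le_left _ hKA).trans hindex) hAf x⟩

end UsQuasinormal

section PNilpotent

variable {G : Type*} [Group G] {p n : ℕ}

lemma exists_normal_index_eq_pow_isSylowIn (hp : p.Prime) {E P : Subgroup G} [E.Normal]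
    (hE : IsPNilpotent p (G ⧸ E)) (hP : IsSylowIn p P E) :
    ∃ L : Subgroup G, L.Normal ∧ (∃ k, L.index = p ^ k) ∧ IsSylowIn p P L := by
  obtain ⟨N, hN, hcard, k, hk⟩ := hE
  obtain ⟨hPE, hPp, hPindex⟩ := hP
  have hsurj := QuotientGroup.mk'_surjective E
  have hEL : E ≤ N.comap (QuotientGroup.mk' E) := QuotientGroup.le_comap_mk' E N
  have hrel : E.relIndex (N.comap (QuotientGroup.mk' E)) = Nat.card N := by
    rw [← Subgroup.map_comap_eq_self_of_surjective hsurj N, ← Subgroup.relIndex_ker,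
      QuotientGroup.ker_mk', Subgroup.map_comap_eq_self_of_surjective hsurj N]
  refine ⟨N.comap (QuotientGroup.mk' E), hN.comap _,
    ⟨k, (N.index_comap_of_surjective hsurj).trans hk⟩, hPE.trans hEL, hPp, fun hdvd => ?_⟩
  change p ∣ P.relIndex _ at hdvd
  rw [← Subgroup.relIndex_mul_relIndex P E _ hPE hEL, hrel, hp.dvd_mul] at hdvd
  exact hdvd.elim hPindex ((hp.coprime_iff_not_dvd).1 hcard.symm)

lemma not_isNMaximalIn_bot (hn : 1 ≤ n) (H : Subgroup G) : ¬ IsNMaximalIn n H ⊥ := by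
  rintro ⟨c, hc0, -, hc⟩
  exact not_lt_bot (hc0 ▸ (hc ⟨0, hn⟩).1 : c _ < ⊥)

lemma isPNilpotent_of_card_eq_pow {k : ℕ} (h : Nat.card G = p ^ k) : IsPNilpotent p G :=
  ⟨⊥, inferInstance, by rw [Subgroup.card_bot]; exact Nat.coprime_one_left p, k,
    Subgroup.index_bot.trans h⟩

lemma isSylowIn_bot_of_coprime_card (hp : p.Prime) {N : Subgroup G}
    (hN : (Nat.card N).Coprime p) : IsSylowIn p ⊥ N := by
  refine ⟨bot_le, IsPGroup.of_bot, ?_⟩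
  rw [Subgroup.bot_subgroupOf, Subgroup.index_bot]
  exact (hp.coprime_iff_not_dvd).1 hN.symm

lemma index_ker_eq_prime {P : Type*} [Group P] [Fact p.Prime]
    {f : P →* Multiplicative (ZMod p)} (hf : f ≠ 1) : f.ker.index = p := by
  have hdvd : Nat.card f.range ∣ p :=
    (Subgroup.card_subgroup_dvd_card f.range).trans (Nat.card_zmod p).dvd
  rw [Subgroup.index_ker]
  exact ((Nat.dvd_prime Fact.out).1 hdvd).resolve_left fun h =>
    hf (MonoidHom.range_eq_bot_iff.1 (Subgroup.card_eq_one.1 h))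

lemma exists_isNMaximalIn_le_ker [Finite G] [Fact p.Prime] (hn : 1 ≤ n) {P : Subgroup G}
    (hP : IsPGroup p P) (hcard : p ^ n ∣ Nat.card P) {f : P →* Multiplicative (ZMod p)}
    (hf : f ≠ 1) :
    ∃ K ≤ P, (K.subgroupOf P).Normal ∧ K.relIndex P = p ^ n ∧ IsNMaximalIn n K P ∧
      K.subgroupOf P ≤ f.ker := by
  have hp : p.Prime := Fact.out
  obtain ⟨m, rfl⟩ := Nat.exists_eq_add_of_le' hn
  have hker := index_ker_eq_prime hf
  have hdvd : p ^ m ∣ Nat.card f.ker := by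
    refine Nat.dvd_of_mul_dvd_mul_right hp.pos ?_
    rwa [← f.ker.card_mul_index, hker, pow_succ] at hcard
  obtain ⟨H, hHker, hH, hindex, hmax⟩ := exists_normal_isNMaximalIn hP f.ker hdvd
  have hsub : (H.map P.subtype).subgroupOf P = H :=
    Subgroup.comap_map_eq_self_of_injective P.subtype_injective H
  have hkermax : IsMaximalIn f.ker ⊤ := isMaximalIn_of_prime_relIndex le_top (by
    rw [Subgroup.relIndex_top_right, hker]
    exact hp)
  have htop : (⊤ : Subgroup P).map P.subtype = P := by
    rw [← MonoidHom.range_eq_map, Subgroup.range_subtype]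
  refine ⟨H.map P.subtype, Subgroup.map_subtype_le H, hsub.symm ▸ hH, ?_, ?_, hsub.le.trans hHker⟩
  · rw [Subgroup.relIndex, hsub, ← Subgroup.relIndex_mul_index hHker, hindex, hker, pow_succ]
  · have hmap := (hmax.cons hkermax).map P.subtype_injective
    rwa [htop] at hmap

variable [Finite G]

lemma exists_isFusionStable_of_forall_isNMaximalIn [Fact p.Prime] (hn : 1 ≤ n)
    (hcop : (Nat.card G).Coprime (∏ i ∈ Finset.Icc 1 n, (p ^ i - 1))) {L : Subgroup G}
    (P : Sylow p L)
    (hmax : ∀ H : Subgroup G, IsNMaximalIn n H ((P : Subgroup L).map L.subtype) →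
      HasPNilpotentSupplement p H ∨ UsQuasinormal H)
    {f : P →* Multiplicative (ZMod p)} (hf : f ≠ 1) :
    ∃ x : P, f x ≠ 1 ∧ IsFusionStable f x := by
  by_cases hcard : p ^ n ∣ Nat.card P
  · obtain ⟨K, hKP, hK, hindex, hKmax, hKf⟩ := exists_isNMaximalIn_le_ker hn P.2 hcard hf
    obtain hsupp | hquasi := hmax _ (hKmax.map L.subtype_injective)
    · exact (hsupp.of_map L.subtype_injective Fact.out).exists_isFusionStable P hKP hf hKf
    · exact hquasi.exists_isFusionStable hn hcop P hKP hindex.dvd hf hKf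
  · obtain ⟨x, hx⟩ := DFunLike.ne_iff.1 hf
    obtain ⟨a, ha⟩ := P.2.exists_card_eq
    have han : a ≤ n := (not_le.1 fun h => hcard (ha ▸ pow_dvd_pow p h)).le
    refine ⟨x, hx, isFusionStable_of_relIndex_dvd hn
      (hcop.coprime_dvd_left (Subgroup.card_subgroup_dvd_card L)) P ⊥ ?_ ?_ x⟩
    · rw [Subgroup.relIndex_bot_left, ha]
      exact pow_dvd_pow p han
    · rw [Subgroup.bot_subgroupOf]
      exact bot_le

lemma isPNilpotent_of_forall_isNMaximalIn_sylow (hp : p.Prime) (hn : 1 ≤ n)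
    (hcop : (Nat.card G).Coprime (∏ i ∈ Finset.Icc 1 n, (p ^ i - 1))) {L : Subgroup G} [L.Normal]
    {k : ℕ} (hL : L.index = p ^ k) {P : Subgroup G} (hP : IsSylowIn p P L)
    (hmax : ∀ H : Subgroup G, IsNMaximalIn n H P →
      HasPNilpotentSupplement p H ∨ UsQuasinormal H) : IsPNilpotent p G := by
  have := Fact.mk hp
  obtain ⟨hPL, hPp, hPindex⟩ := hP
  let S : Sylow p L := (hPp.comap_subtype (K := L)).toSylow hPindex
  have hS : (S : Subgroup L).map L.subtype = P :=
    Subgroup.map_subgroupOf_eq_of_le hPL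
  refine isPNilpotent_of_coprime_card_pResidual hp L hL
    (coprime_card_pResidual_of_forall_exists_extension S
      (exists_extension_of_forall_exists_isFusionStable S fun f hf => ?_))
  exact exists_isFusionStable_of_forall_isNMaximalIn hn hcop S (hS ▸ hmax) hf

end PNilpotent

/-- If `gcd(|G|, (p-1)(p²-1)⋯(pⁿ-1)) = 1` for some `n ≥ 1`, then `G` is
`p`-nilpotent iff `G` has a normal subgroup `E` with `G/E` `p`-nilpotent such that, for
some Sylow `p`-subgroup `P` of `E`, every `n`-maximal subgroup of `P` either has a
`p`-nilpotent supplement in `G` or is 𝔘ₛ-quasinormal in `G`. -/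
theorem stmt_6 {G : Type*} [Group G] [Finite G] (p n : ℕ) (hp : p.Prime) (hn : 1 ≤ n)
    (hcop : Nat.Coprime (Nat.card G) (∏ i ∈ Finset.Icc 1 n, (p ^ i - 1))) :
    IsPNilpotent p G ↔
      ∃ E : Subgroup G, ∃ _ : E.Normal, IsPNilpotent p (G ⧸ E) ∧
        ∃ P : Subgroup G, IsSylowIn p P E ∧
          ∀ H : Subgroup G, IsNMaximalIn n H P →
            HasPNilpotentSupplement p H ∨ UsQuasinormal H := by
  constructor
  · rintro ⟨N, hN, hcard, k, hk⟩
    have hquot : IsPNilpotent p (G ⧸ N) := isPNilpotent_of_card_eq_pow (N.index_eq_card ▸ hk)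
    have hbot : IsSylowIn p ⊥ N := isSylowIn_bot_of_coprime_card hp hcard
    exact ⟨N, hN, hquot, ⊥, hbot, fun H hH => absurd hH (not_isNMaximalIn_bot hn H)⟩
  · rintro ⟨E, hE, hquot, P, hP, hmax⟩
    obtain ⟨L, hL, ⟨k, hk⟩, hPL⟩ := exists_normal_index_eq_pow_isSylowIn hp hquot hP
    exact isPNilpotent_of_forall_isNMaximalIn_sylow hp hn hcop hk hPL hmax
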